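/- arXiv:2407.21175 — 2 statements merged into one kernel-verified Lean document; each statement's English description precedes it below -/
import Mathlib

section
/- In N(n), suppose 1 ≤ i < j ≤ n and i ≤ i' < j' ≤ n. Then: Y_{[i',j']} Y_{[i,j]} = Y_{[i,j']} if j = i'; Y_{[i',j']} Y_{[i,j]} = Y_{[i,j]} Y_{[i',j']} if j < i'; Y_{[i',j']} Y_{[i,j]} = Y_{[i,j]} Y_{[i'+1,j'+1]} if j > j'; and Y_{[i',j']} Y_{[i,j]} = 0 if j' ≥ j > i'. -/
/-- Index type for the generators `Y_1, …, Y_{n-1}` of the nilCoxeter algebra `N(n)`. -/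
abbrev NIdx (n : ℕ) := {i : ℕ // 1 ≤ i ∧ i + 1 ≤ n}

/-- The generator `Y_i` in the free algebra (junk value `0` outside `1 ≤ i ≤ n-1`). -/
noncomputable def Yf (n : ℕ) (i : ℕ) : FreeAlgebra ℤ (NIdx n) :=
  if h : 1 ≤ i ∧ i + 1 ≤ n then FreeAlgebra.ι ℤ ⟨i, h⟩ else 0

/-- The defining relations of the nilCoxeter algebra `N(n)` of the symmetric group `S_n`:
`Y_i² = 0`, the braid relations `Y_i Y_{i+1} Y_i = Y_{i+1} Y_i Y_{i+1}`, and the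
commutation relations `Y_i Y_j = Y_j Y_i` for `|i - j| ≥ 2`. -/
inductive NRel (n : ℕ) : FreeAlgebra ℤ (NIdx n) → FreeAlgebra ℤ (NIdx n) → Prop
  | sq (i : NIdx n) : NRel n (FreeAlgebra.ι ℤ i * FreeAlgebra.ι ℤ i) 0
  | braid (i j : NIdx n) (h : j.1 = i.1 + 1) :
      NRel n (FreeAlgebra.ι ℤ i * FreeAlgebra.ι ℤ j * FreeAlgebra.ι ℤ i)
        (FreeAlgebra.ι ℤ j * FreeAlgebra.ι ℤ i * FreeAlgebra.ι ℤ j)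
  | comm (i j : NIdx n) (h : i.1 + 2 ≤ j.1 ∨ j.1 + 2 ≤ i.1) :
      NRel n (FreeAlgebra.ι ℤ i * FreeAlgebra.ι ℤ j)
        (FreeAlgebra.ι ℤ j * FreeAlgebra.ι ℤ i)

/-- The nilCoxeter algebra `N(n)` of the symmetric group `S_n` over `ℤ`. -/
abbrev Nring (n : ℕ) := RingQuot (NRel n)

/-- The image of the generator `Y_i` in `N(n)`. -/
noncomputable def Ygen (n : ℕ) (i : ℕ) : Nring n :=
  RingQuot.mkRingHom (NRel n) (Yf n i)

/-- `Y_{[i,j]} = Y_{j-1} Y_{j-2} ⋯ Y_{i+1} Y_i`, with `Y_{[i,i]} = 1`. -/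
noncomputable def Yint (n : ℕ) (i j : ℕ) : Nring n :=
  (((List.range' i (j - i)).reverse).map (Ygen n)).prod

/-- `Y_{[i,j];k} = Y_{[i,j+1-k]} Y_{[i+1,j+2-k]} ⋯ Y_{[i+k-1,j]}`, with `Y_{[i,j];0} = 1`. -/
noncomputable def Yintk (n : ℕ) (i j k : ℕ) : Nring n :=
  ((List.range k).map fun t => Yint n (i + t) (j + 1 - k + t)).prod

/-!
By the braid relation `Y_a Y_{a+1} Y_a = Y_{a+1} Y_a Y_{a+1}` and far commutation, passing `Y_a`
rightwards through a descending product `Y_{[i,j]}` with `i ≤ a` and `a + 1 < j` turns it into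
`Y_{a+1}`. Hence a whole product `Y_{[i',j']}` passes through `Y_{[i,j]}` with both endpoints
shifted by one. If instead `i' < j ≤ j'`, the factors `Y_{i'}, …, Y_{j-2}` pass through, and the
next one, `Y_{j-1}`, meets the leading factor `Y_{j-1}` of `Y_{[i,j]}` and squares to zero.
-/

/-- The product `y (j - 1) * ⋯ * y (i + 1) * y i` of a sequence over the half-open interval
`[i, j)`, in descending order; it is `1` when `j ≤ i`. For `y = Ygen n` it is `Yint n i j`. -/
def descProd {M : Type*} [Monoid M] (y : ℕ → M) (i j : ℕ) : M :=
  ((List.range' i (j - i)).reverse.map y).prod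

/-- The relations of the Artin braid monoid of type A for a sequence of elements of a monoid. -/
structure IsBraidSeq {M : Type*} [Monoid M] (y : ℕ → M) : Prop where
  braid (i : ℕ) : y i * y (i + 1) * y i = y (i + 1) * y i * y (i + 1)
  commute {i j : ℕ} (h : i + 2 ≤ j) : Commute (y i) (y j)

/-- The nilCoxeter relations of type A for a sequence indexed by `ℕ`. A finite family, such as the
generators of `N(n)`, is covered by extending it by zero, which preserves every relation. -/
structure IsNilCoxeterSeq {M : Type*} [MonoidWithZero M] (y : ℕ → M) : Prop
    extends IsBraidSeq y where
  mul_self (i : ℕ) : y i * y i = 0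

section Monoid

variable {M : Type*} [Monoid M] {i j k i' j' : ℕ}

theorem descProd_self (y : ℕ → M) (i : ℕ) : descProd y i i = 1 := by
  simp [descProd]

theorem descProd_mul_descProd (y : ℕ → M) (hik : i ≤ k) (hkj : k ≤ j) :
    descProd y k j * descProd y i k = descProd y i j := by
  obtain ⟨a, rfl⟩ := Nat.exists_eq_add_of_le hik
  obtain ⟨b, rfl⟩ := Nat.exists_eq_add_of_le hkj
  have range_append : List.range' i (i + a + b - i) = List.range' i a ++ List.range' (i + a) b := by
    rw [List.range'_append_1, Nat.add_assoc, Nat.add_sub_cancel_left]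
  simp only [descProd, range_append, Nat.add_sub_cancel_left, List.reverse_append, List.map_append,
    List.prod_append]

theorem descProd_succ (y : ℕ → M) (hij : i ≤ j) :
    descProd y i (j + 1) = y j * descProd y i j := by
  have single : descProd y j (j + 1) = y j := by simp [descProd]
  rw [← descProd_mul_descProd y hij j.le_succ, single]

theorem commute_descProd_right {x : M} {y : ℕ → M}
    (hx : ∀ k, i ≤ k → k < j → Commute x (y k)) : Commute x (descProd y i j) := by
  refine Commute.list_prod_right _ _ fun z hz => ?_
  simp only [List.mem_map, List.mem_reverse, List.mem_range'_1] at hz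
  obtain ⟨k, ⟨hik, hkj⟩, rfl⟩ := hz
  exact hx k hik (by omega)

namespace IsBraidSeq

variable {y : ℕ → M}

theorem commute_descProd_descProd (hy : IsBraidSeq y) (h : j < i') :
    Commute (descProd y i' j') (descProd y i j) :=
  commute_descProd_right fun _ _ hkj => (commute_descProd_right fun _ hi'l _ =>
    hy.commute (by omega)).symm

theorem semiconjBy_descProd (hy : IsBraidSeq y) (hik : i ≤ k) (hkj : k + 1 < j) :
    SemiconjBy (descProd y i j) (y (k + 1)) (y k) := by
  have factor : descProd y i j = descProd y (k + 2) j * (y (k + 1) * y k * descProd y i k) := by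
    rw [← descProd_mul_descProd y (by omega : i ≤ k + 2) hkj, descProd_succ y (by omega),
      descProd_succ y hik, mul_assoc (y (k + 1))]
  have lower : Commute (descProd y i k) (y (k + 1)) :=
    (commute_descProd_right fun _ _ hlk => (hy.commute (by omega)).symm).symm
  have middle : SemiconjBy (y (k + 1) * y k) (y (k + 1)) (y k) := by
    rw [SemiconjBy, ← hy.braid, mul_assoc]
  have upper : Commute (descProd y (k + 2) j) (y k) :=
    (commute_descProd_right fun _ hkl _ => hy.commute hkl).symm
  rw [factor]
  exact upper.semiconjBy.mul_left (middle.mul_left lower)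

theorem semiconjBy_descProd_descProd (hy : IsBraidSeq y) (hii' : i ≤ i') (hi'j' : i' ≤ j')
    (hj'j : j' < j) :
    SemiconjBy (descProd y i j) (descProd y (i' + 1) (j' + 1)) (descProd y i' j') := by
  induction j', hi'j' using Nat.le_induction with
  | base => simpa only [descProd_self] using SemiconjBy.one_right _
  | succ k hi'k ih =>
    rw [descProd_succ y hi'k, descProd_succ y (Nat.succ_le_succ hi'k)]
    exact (hy.semiconjBy_descProd (hii'.trans hi'k) hj'j).mul_right (ih (by omega))

end IsBraidSeq

end Monoid

section MonoidWithZero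

variable {M : Type*} [MonoidWithZero M] {y : ℕ → M} {i j i' j' : ℕ}

namespace IsNilCoxeterSeq

theorem mul_descProd_succ (hy : IsNilCoxeterSeq y) (hij : i ≤ j) :
    y j * descProd y i (j + 1) = 0 := by
  rw [descProd_succ y hij, ← mul_assoc, hy.mul_self, zero_mul]

theorem descProd_mul_descProd_eq_zero (hy : IsNilCoxeterSeq y) (hii' : i ≤ i') (hi'j : i' < j)
    (hjj' : j ≤ j') : descProd y i' j' * descProd y i j = 0 := by
  obtain ⟨m, rfl⟩ := Nat.exists_eq_add_one_of_ne_zero (Nat.ne_zero_of_lt hi'j)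
  have hi'm : i' ≤ m := Nat.le_of_lt_succ hi'j
  calc
    descProd y i' j' * descProd y i (m + 1)
      = descProd y (m + 1) j' * (y m * (descProd y i' m * descProd y i (m + 1))) := by
        rw [← descProd_mul_descProd y hi'j.le hjj', descProd_succ y hi'm]
        simp only [mul_assoc]
    _ = descProd y (m + 1) j' *
          (y m * descProd y i (m + 1) * descProd y (i' + 1) (m + 1)) := by
        rw [← (hy.semiconjBy_descProd_descProd hii' hi'm m.lt_succ_self).eq, mul_assoc (y m)]
    _ = 0 := by rw [hy.mul_descProd_succ (hii'.trans hi'm), zero_mul, mul_zero]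

end IsNilCoxeterSeq

theorem Yint_mul_Yint_general (hy : IsNilCoxeterSeq y) (hij : i ≤ j) (hii' : i ≤ i')
    (hi'j' : i' ≤ j') :
    (j = i' → descProd y i' j' * descProd y i j = descProd y i j') ∧
    (j < i' → descProd y i' j' * descProd y i j = descProd y i j * descProd y i' j') ∧
    (j > j' →
      descProd y i' j' * descProd y i j = descProd y i j * descProd y (i' + 1) (j' + 1)) ∧
    (j' ≥ j → j > i' → descProd y i' j' * descProd y i j = 0) := by
  refine ⟨?concatenate, fun h => (hy.commute_descProd_descProd h).eq,
    fun h => (hy.semiconjBy_descProd_descProd hii' hi'j' h).eq.symm,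
    fun hjj' hi'j => hy.descProd_mul_descProd_eq_zero hii' hi'j hjj'⟩
  rintro rfl
  exact descProd_mul_descProd y hij hi'j'

end MonoidWithZero

section Generators

variable {n i : ℕ}

theorem Ygen_eq_mkRingHom_ι (h : 1 ≤ i ∧ i + 1 ≤ n) :
    Ygen n i = RingQuot.mkRingHom (NRel n) (FreeAlgebra.ι ℤ ⟨i, h⟩) := by
  rw [Ygen, Yf, dif_pos h]

theorem Ygen_eq_zero (h : ¬ (1 ≤ i ∧ i + 1 ≤ n)) : Ygen n i = 0 := by
  rw [Ygen, Yf, dif_neg h, map_zero]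

theorem Ygen_mul_self (n i : ℕ) : Ygen n i * Ygen n i = 0 := by
  by_cases h : 1 ≤ i ∧ i + 1 ≤ n
  · rw [Ygen_eq_mkRingHom_ι h, ← map_mul, RingQuot.mkRingHom_rel (NRel.sq ⟨i, h⟩), map_zero]
  · rw [Ygen_eq_zero h, zero_mul]

theorem Ygen_braid (n i : ℕ) :
    Ygen n i * Ygen n (i + 1) * Ygen n i = Ygen n (i + 1) * Ygen n i * Ygen n (i + 1) := by
  by_cases hi : 1 ≤ i ∧ i + 1 ≤ n
  · by_cases hi' : 1 ≤ i + 1 ∧ i + 1 + 1 ≤ n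
    · simpa only [Ygen_eq_mkRingHom_ι hi, Ygen_eq_mkRingHom_ι hi', map_mul] using
        RingQuot.mkRingHom_rel (NRel.braid ⟨i, hi⟩ ⟨i + 1, hi'⟩ rfl)
    · simp only [Ygen_eq_zero hi', mul_zero, zero_mul]
  · simp only [Ygen_eq_zero hi, mul_zero, zero_mul]

theorem Ygen_commute (n : ℕ) {i j : ℕ} (h : i + 2 ≤ j) : Commute (Ygen n i) (Ygen n j) := by
  by_cases hi : 1 ≤ i ∧ i + 1 ≤ n
  · by_cases hj : 1 ≤ j ∧ j + 1 ≤ n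
    · simpa only [commute_iff_eq, Ygen_eq_mkRingHom_ι hi, Ygen_eq_mkRingHom_ι hj, map_mul] using
        RingQuot.mkRingHom_rel (NRel.comm ⟨i, hi⟩ ⟨j, hj⟩ (.inl h))
    · exact Ygen_eq_zero hj ▸ Commute.zero_right _
  · exact Ygen_eq_zero hi ▸ Commute.zero_left _

theorem isNilCoxeterSeq_Ygen (n : ℕ) : IsNilCoxeterSeq (Ygen n) where
  mul_self := Ygen_mul_self n
  braid := Ygen_braid n
  commute := Ygen_commute n

end Generators

/-- Products of the elements `Y_{[i,j]}` in `N(n)`: for `1 ≤ i < j ≤ n` and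
`i ≤ i' < j' ≤ n`, the product `Y_{[i',j']} Y_{[i,j]}` equals `Y_{[i,j']}` if `j = i'`;
`Y_{[i,j]} Y_{[i',j']}` if `j < i'`; `Y_{[i,j]} Y_{[i'+1,j'+1]}` if `j > j'`; and `0` if
`j' ≥ j > i'`. -/
theorem Yint_mul_Yint (n : ℕ) (hn : 2 ≤ n) (i j i' j' : ℕ)
    (h1 : 1 ≤ i) (h2 : i < j) (h3 : j ≤ n)
    (h4 : i ≤ i') (h5 : i' < j') (h6 : j' ≤ n) :
    (j = i' → Yint n i' j' * Yint n i j = Yint n i j') ∧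
    (j < i' → Yint n i' j' * Yint n i j = Yint n i j * Yint n i' j') ∧
    (j > j' → Yint n i' j' * Yint n i j = Yint n i j * Yint n (i' + 1) (j' + 1)) ∧
    (j' ≥ j → j > i' → Yint n i' j' * Yint n i j = 0) :=
  Yint_mul_Yint_general (isNilCoxeterSeq_Ygen n) h2.le h4 h5.le
end

section
/- The ring X(n) is free as a ℤ-module. -/
/-- Index type for the generators `X_{i,j}`, `1 ≤ i < j ≤ n`. -/
abbrev XIdx (n : ℕ) := {p : ℕ × ℕ // 1 ≤ p.1 ∧ p.1 < p.2 ∧ p.2 ≤ n}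

/-- The element `X_{i,j}` of the free algebra, with the conventions
`X_{a,b} = (-1)^(a-b-1) X_{b,a}` for `a > b` and `X_{a,a} = 0`. -/
noncomputable def xf (n : ℕ) (i j : ℕ) : FreeAlgebra ℤ (XIdx n) :=
  if h : 1 ≤ i ∧ i < j ∧ j ≤ n then FreeAlgebra.ι ℤ ⟨(i, j), h⟩
  else if h : 1 ≤ j ∧ j < i ∧ i ≤ n then ((-1 : ℤ) ^ (i - j - 1)) • FreeAlgebra.ι ℤ ⟨(j, i), h⟩
  else 0

/-- The defining relations of the signed nilcactus algebra `X(n)`. -/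
inductive XRel (n : ℕ) : FreeAlgebra ℤ (XIdx n) → FreeAlgebra ℤ (XIdx n) → Prop
  | sq (i j : ℕ) (h1 : 1 ≤ i) (h2 : i < j) (h3 : j ≤ n) :
      XRel n (xf n i j * xf n i j) 0
  | contain (i j i' j' : ℕ) (h1 : 1 ≤ i) (h2 : i < j) (h3 : j ≤ n)
      (h1' : 1 ≤ i') (h2' : i' < j') (h3' : j' ≤ n)
      (hsub : Set.Icc i' j' ⊆ Set.Icc i j) :
      XRel n (xf n i j * xf n i' j')
        (((-1 : ℤ) ^ ((j - i - 1) * (j' - i' - 1))) •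
          (xf n (i + j - i') (i + j - j') * xf n i j))
  | disj (i j i' j' : ℕ) (h1 : 1 ≤ i) (h2 : i < j) (h3 : j ≤ n)
      (h1' : 1 ≤ i') (h2' : i' < j') (h3' : j' ≤ n)
      (hd : Set.Icc i j ∩ Set.Icc i' j' = ∅) :
      XRel n (xf n i j * xf n i' j')
        (((-1 : ℤ) ^ ((j - i - 1) * (j' - i' - 1))) • (xf n i' j' * xf n i j))

/-- The signed nilcactus algebra `X(n)`. -/
abbrev Xring (n : ℕ) := RingQuot (XRel n)

/-!
Every relation of `X(n)` either kills a word or equates one word with a sign times another. Suppose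
each word carries a sign such that, in every context, the sign in a relation is the ratio of the
signs of its two sides. Dividing words by their signs then removes all signs from the relations, so
the coefficient of a given nonzero normalized word is a well-defined functional on `X(n)`. The
distinct nonzero normalized words therefore form a basis; without a consistent choice of signs, some
word might be identified with its negative and create torsion.

To find the signs, translate the interval of each letter of a word by the product of the interval
reversals of the letters before it. An exchange relation `X_a X_b = ± X_c X_a` only transposes two
adjacent entries of the resulting list of finite sets, and its sign depends only on their
cardinalities and on whether one contains the other, hence is symmetric and unaffected by
translation. It also equals `1` for two equal entries, so its product over all pairs that are in
order for a fixed well-order changes under a transposition by exactly the required sign.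
-/

section RingQuot

variable {R A N : Type*} [CommSemiring R] [Semiring A] [Algebra R A] [AddCommMonoid N]
  [Module R N] {r : A → A → Prop}

theorem map_eq_map_of_mkAlgHom_eq (f : A →ₗ[R] N)
    (hf : ∀ ⦃x y⦄, r x y → ∀ p q, f (p * x * q) = f (p * y * q)) {x y : A}
    (h : RingQuot.mkAlgHom R r x = RingQuot.mkAlgHom R r y) : f x = f y := by
  -- The projection to the quotient by this congruence factors through `RingQuot r`.
  let C : RingCon A :=
    { r := fun x y => ∀ p q, f (p * x * q) = f (p * y * q)
      iseqv := ⟨fun _ _ _ => rfl, fun h p q => (h p q).symm,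
        fun h h' p q => (h p q).trans (h' p q)⟩
      add' := fun h h' p q => by simp only [mul_add, add_mul, map_add, h p q, h' p q]
      mul' := fun {w x y z} h h' p q => by
        calc f (p * (w * y) * q) = f (p * w * (y * q)) := by simp only [mul_assoc]
          _ = f (p * x * y * q) := by rw [h, mul_assoc (p * x)]
          _ = f (p * (x * z) * q) := by rw [h', mul_assoc p] }
  have hC : ∀ ⦃x y⦄, r x y → C.mk' x = C.mk' y := fun x y hxy => C.eq.2 (hf hxy)
  have hxy : C.mk' x = C.mk' y := by
    rw [← RingQuot.lift_mkRingHom_apply C.mk' hC x, ← RingQuot.lift_mkRingHom_apply C.mk' hC y,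
      ← RingQuot.mkAlgHom_coe R r]
    exact congrArg _ h
  simpa using C.eq.1 hxy 1 1

theorem exists_linearMap_ringQuot (f : A →ₗ[R] N)
    (hf : ∀ ⦃x y⦄, r x y → ∀ p q, f (p * x * q) = f (p * y * q)) :
    ∃ φ : RingQuot r →ₗ[R] N, ∀ x, φ (RingQuot.mkAlgHom R r x) = f x := by
  let π := RingQuot.mkAlgHom R r
  let lift : RingQuot r → A := Function.surjInv (RingQuot.mkAlgHom_surjective R r)
  have hlift : ∀ y, π (lift y) = y := Function.surjInv_eq _
  exact
    ⟨{ toFun := fun y => f (lift y)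
       map_add' := fun y z => by
        rw [← map_add]
        exact map_eq_map_of_mkAlgHom_eq f hf (by rw [map_add, hlift, hlift, hlift])
       map_smul' := fun c y => by
        rw [RingHom.id_apply, ← map_smul]
        exact map_eq_map_of_mkAlgHom_eq f hf (by rw [map_smul, hlift, hlift]) },
      fun x => map_eq_map_of_mkAlgHom_eq f hf (hlift (π x))⟩

theorem map_mul_mul_eq_of_basis {ι : Type*} (b : Module.Basis ι R A) (f : A →ₗ[R] N) {x y : A}
    (h : ∀ i j, f (b i * x * b j) = f (b i * y * b j)) (p q : A) :
    f (p * x * q) = f (p * y * q) := by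
  have hright : ∀ i q, f (b i * x * q) = f (b i * y * q) := fun i q => by
    have : f ∘ₗ LinearMap.mulLeft R (b i * x) = f ∘ₗ LinearMap.mulLeft R (b i * y) :=
      b.ext fun j => h i j
    exact LinearMap.congr_fun this q
  have hleft : f ∘ₗ LinearMap.mulRight R (x * q) = f ∘ₗ LinearMap.mulRight R (y * q) :=
    b.ext fun i => by simpa [mul_assoc] using hright i q
  simpa [mul_assoc] using LinearMap.congr_fun hleft p

end RingQuot

section TwistedMonomialRel

variable {R A M : Type*} [CommSemiring R] [Semiring A] [Algebra R A] [Monoid M]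
  (m : M →* A) (ε : M → Rˣ)

/-- The image of the monomial `m w` in `RingQuot r`, divided by the unit `ε w`. With this
normalization, relations compatible with `ε` lose their coefficients. -/
noncomputable def normalizedMonomial (r : A → A → Prop) (w : M) : RingQuot r :=
  (ε w)⁻¹ • RingQuot.mkAlgHom R r (m w)

/-- The relations `m u = 0`, and those relations `m u = c • m v` whose coefficient is, in every
context, the ratio of the units attached to the two sides by `ε`. -/
inductive IsTwistedMonomialRel : A → A → Prop
  | vanish (u : M) : IsTwistedMonomialRel (m u) 0
  | exchange (u v : M) (c : Rˣ) (h : ∀ p q, ε (p * u * q) = c * ε (p * v * q)) :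
      IsTwistedMonomialRel (m u) (c • m v)

variable {m ε} {r : A → A → Prop}

theorem normalizedMonomial_eq_zero {u : M} (h : r (m u) 0) (p q : M) :
    normalizedMonomial m ε r (p * u * q) = 0 := by
  simp [normalizedMonomial, RingQuot.mkAlgHom_rel R h]

theorem normalizedMonomial_eq {u v : M} {c : Rˣ} (h : r (m u) (c • m v)) {p q : M}
    (hε : ε (p * u * q) = c * ε (p * v * q)) :
    normalizedMonomial m ε r (p * u * q) = normalizedMonomial m ε r (p * v * q) := by
  have hrel : RingQuot.mkAlgHom R r (m u) = c • RingQuot.mkAlgHom R r (m v) := by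
    rw [RingQuot.mkAlgHom_rel R h, Units.smul_def, map_smul, Units.smul_def]
  simp only [normalizedMonomial, map_mul, hrel, mul_smul_comm, smul_mul_assoc, smul_smul, hε,
    mul_inv_rev, inv_mul_cancel_right]

theorem span_normalizedMonomial (b : Module.Basis M R A) (hb : ⇑b = m) :
    Submodule.span R (Set.range (normalizedMonomial m ε r) \ {0}) = ⊤ := by
  have hsmul : normalizedMonomial m ε r =
      (fun w => (ε w)⁻¹) • ((RingQuot.mkAlgHom R r).toLinearMap ∘ b) := by rw [hb]; rfl
  rw [Submodule.span_sdiff_singleton_zero, hsmul]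
  apply Module.Basis.units_smul_span_eq_top
  rw [Set.range_comp, ← Submodule.map_span, b.span_eq, Submodule.map_top, LinearMap.range_eq_top]
  exact RingQuot.mkAlgHom_surjective R r

open Classical in
theorem exists_dual_normalizedMonomial (b : Module.Basis M R A) (hb : ⇑b = m)
    (hr : ∀ ⦃x y⦄, r x y → IsTwistedMonomialRel m ε x y) {t : RingQuot r} (ht : t ≠ 0) :
    ∃ φ : Module.Dual R (RingQuot r), ∀ w,
      φ (normalizedMonomial m ε r w) = if normalizedMonomial m ε r w = t then 1 else 0 := by
  let f : A →ₗ[R] R := b.constr R fun w => if normalizedMonomial m ε r w = t then (ε w : R) else 0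
  have hfm : ∀ w, f (m w) = if normalizedMonomial m ε r w = t then (ε w : R) else 0 := fun w =>
    hb ▸ b.constr_basis R _ w
  have hf : ∀ ⦃x y⦄, r x y → ∀ p q, f (p * x * q) = f (p * y * q) := by
    refine fun x y hxy => map_mul_mul_eq_of_basis b f fun p q => ?_
    rw [hb]
    cases hr hxy with
    | vanish u =>
      rw [← map_mul, ← map_mul, hfm, normalizedMonomial_eq_zero hxy, if_neg ht.symm, mul_zero,
        zero_mul, map_zero]
    | exchange u v c hε =>
      rw [mul_smul_comm, smul_mul_assoc, Units.smul_def, map_smul, ← map_mul, ← map_mul,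
        ← map_mul, ← map_mul, hfm, hfm, normalizedMonomial_eq hxy (hε p q), hε, smul_ite,
        smul_zero, Units.val_mul, smul_eq_mul]
  obtain ⟨φ, hφ⟩ := exists_linearMap_ringQuot f hf
  refine ⟨φ, fun w => ?_⟩
  conv_lhs => rw [normalizedMonomial]
  rw [Units.smul_def, map_smul, hφ, hfm, smul_ite, smul_zero, smul_eq_mul, Units.inv_mul]

theorem linearIndependent_normalizedMonomial (b : Module.Basis M R A) (hb : ⇑b = m)
    (hr : ∀ ⦃x y⦄, r x y → IsTwistedMonomialRel m ε x y) :
    LinearIndependent R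
      ((↑) : ↥(Set.range (normalizedMonomial m ε r) \ {0}) → RingQuot r) := by
  classical
  choose φ hφ using fun t : ↥(Set.range (normalizedMonomial m ε r) \ {0}) =>
    exists_dual_normalizedMonomial b hb hr t.2.2
  have hcoeff : ∀ t, φ t ∘ₗ Finsupp.linearCombination R (↑) = Finsupp.lapply t := by
    refine fun t => Finsupp.lhom_ext' fun s => LinearMap.ext_ring ?_
    obtain ⟨_, ⟨w, rfl⟩, _⟩ := s
    simp [hφ, Finsupp.single_apply, Subtype.ext_iff]
  intro f g hfg
  ext t
  calc f t = φ t (Finsupp.linearCombination R (↑) f) := (LinearMap.congr_fun (hcoeff t) f).symm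
    _ = φ t (Finsupp.linearCombination R (↑) g) := congrArg (φ t) hfg
    _ = g t := LinearMap.congr_fun (hcoeff t) g

theorem free_ringQuot_of_isTwistedMonomialRel (b : Module.Basis M R A) (hb : ⇑b = m)
    (hr : ∀ ⦃x y⦄, r x y → IsTwistedMonomialRel m ε x y) : Module.Free R (RingQuot r) :=
  .of_basis <| .mk (linearIndependent_normalizedMonomial b hb hr) <| by
    rw [Subtype.range_coe, span_normalizedMonomial b hb]

theorem basisFreeMonoid_eq_lift (R X : Type*) [CommSemiring R] :
    ⇑(FreeAlgebra.basisFreeMonoid R X) = FreeMonoid.lift (FreeAlgebra.ι R) := by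
  ext w
  simp [FreeAlgebra.basisFreeMonoid, FreeAlgebra.equivMonoidAlgebraFreeMonoid]

end TwistedMonomialRel

section OrderedSign

variable {σ S : Type*} [CommMonoid S]

open Classical in
/-- The product of `s A B` over all pairs of entries with `A` before `B` in the list and `A < B` in
a fixed well-order. It turns the factors `s A B` picked up by transposing adjacent entries into a
function of the list. -/
noncomputable def orderedSign (s : σ → σ → S) : List σ → S
  | [] => 1
  | A :: l => (l.map fun B => if WellOrderingRel A B then s A B else 1).prod * orderedSign s l

theorem orderedSign_swap {s : σ → σ → S} (hs : ∀ A B, s A B * s B A = 1) (hs' : ∀ A, s A A = 1)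
    (l₁ l₂ : List σ) (A B : σ) :
    orderedSign s (l₁ ++ A :: B :: l₂) = s A B * orderedSign s (l₁ ++ B :: A :: l₂) := by
  classical
  induction l₁ with
  | nil =>
    have hAB : (if WellOrderingRel A B then s A B else 1) =
        s A B * if WellOrderingRel B A then s B A else 1 := by
      rcases trichotomous_of WellOrderingRel A B with h | rfl | h
      · simp [h, asymm_of WellOrderingRel h]
      · simp [hs']
      · simp [h, asymm_of WellOrderingRel h, hs]
    simp only [List.nil_append, orderedSign, List.map_cons, List.prod_cons, hAB]
    ac_rfl
  | cons C l ih =>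
    simp only [List.cons_append, orderedSign, ih, List.map_append, List.map_cons,
      List.prod_append, List.prod_cons]
    ac_rfl

variable {G α : Type*} [Monoid G] [MulAction G σ]

/-- The list whose entry for the `i`-th letter `aᵢ` of a word is the translate of `x aᵢ` by
`g a₁ * ⋯ * g aᵢ₋₁`. -/
def translates (g : α → G) (x : α → σ) : List α → List σ
  | [] => []
  | a :: w => x a :: (translates g x w).map (g a • ·)

theorem translates_append (g : α → G) (x : α → σ) (u v : List α) :
    translates g x (u ++ v) =
      translates g x u ++ (translates g x v).map ((u.map g).prod • ·) := by
  induction u with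
  | nil => simp [translates]
  | cons a u ih => simp [translates, ih, mul_smul, Function.comp_def]

/-- The conditions under which replacing the subword `a b` by `c a` has the sole effect of
transposing two adjacent entries of `translates g x`. -/
structure IsExchange (g : α → G) (x : α → σ) (a b c : α) : Prop where
  mul_eq : g a * g b = g c * g a
  smul_eq : g a • x b = x c
  smul_fixed : g c • x a = x a

theorem IsExchange.orderedSign_translates {s : σ → σ → S} {g : α → G} {x : α → σ} {a b c : α}
    (h : IsExchange g x a b c) (hs : ∀ A B, s A B * s B A = 1) (hs' : ∀ A, s A A = 1)
    (hinv : ∀ (k : G) A B, s (k • A) (k • B) = s A B) (u v : List α) :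
    orderedSign s (translates g x (u ++ a :: b :: v)) =
      s (x a) (x c) * orderedSign s (translates g x (u ++ c :: a :: v)) := by
  simp only [translates_append, translates, List.map_cons, List.map_map, Function.comp_def,
    ← mul_smul _ (g _), h.mul_eq, h.smul_eq, h.smul_fixed]
  rw [orderedSign_swap hs hs', hinv]

end OrderedSign

open scoped Pointwise

/-- The permutation of `ℕ` reversing the interval `[i, j]` and fixing everything else. -/
def reversal (i j : ℕ) : Equiv.Perm ℕ :=
  Function.Involutive.toPerm (fun k => if i ≤ k ∧ k ≤ j then i + j - k else k) fun k => by
    dsimp only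
    split_ifs <;> omega

theorem reversal_apply (i j k : ℕ) :
    reversal i j k = if i ≤ k ∧ k ≤ j then i + j - k else k := rfl

theorem mem_reversal_smul_finset {i j k : ℕ} {s : Finset ℕ} :
    k ∈ reversal i j • s ↔ reversal i j k ∈ s :=
  Finset.inv_smul_mem_iff.symm

theorem reversal_smul_Icc_of_le {i j p q : ℕ} (hpq : p ≤ q) (hip : i ≤ p) (hqj : q ≤ j) :
    reversal i j • Finset.Icc p q = Finset.Icc (i + j - q) (i + j - p) := by
  ext k
  simp only [mem_reversal_smul_finset, reversal_apply, Finset.mem_Icc]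
  split_ifs <;> omega

theorem reversal_smul_Icc_of_disjoint {i j p q : ℕ} (h : j < p ∨ q < i) :
    reversal i j • Finset.Icc p q = Finset.Icc p q := by
  ext k
  simp only [mem_reversal_smul_finset, reversal_apply, Finset.mem_Icc]
  split_ifs <;> omega

theorem reversal_smul_Icc_of_ge {i j p q : ℕ} (hpi : p ≤ i) (hjq : j ≤ q) :
    reversal i j • Finset.Icc p q = Finset.Icc p q := by
  ext k
  simp only [mem_reversal_smul_finset, reversal_apply, Finset.mem_Icc]
  split_ifs <;> omega

theorem reversal_mul_reversal_of_le {i j p q : ℕ} (hip : i ≤ p) (hqj : q ≤ j) :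
    reversal i j * reversal p q = reversal (i + j - q) (i + j - p) * reversal i j := by
  ext k
  simp only [Equiv.Perm.mul_apply, reversal_apply]
  split_ifs <;> omega

theorem reversal_mul_reversal_of_disjoint {i j p q : ℕ} (h : j < p ∨ q < i) :
    reversal i j * reversal p q = reversal p q * reversal i j := by
  ext k
  simp only [Equiv.Perm.mul_apply, reversal_apply]
  split_ifs <;> omega

/-- The sign attached to transposing adjacent entries `A` and `B` of a list of finite sets. For
intervals `A` and `B` that are disjoint or nested it is the sign in the relations of the nilcactus
algebra, once `X_{b,a}` with `a < b` is rewritten in terms of `X_{a,b}`. -/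
def transpositionSign {β : Type*} [DecidableEq β] (A B : Finset β) : ℤˣ :=
  (-1) ^ (A.card * B.card + if A ⊆ B ∨ B ⊆ A then min A.card B.card else 0)

section TranspositionSign

variable {β : Type*} [DecidableEq β]

theorem transpositionSign_comm (A B : Finset β) :
    transpositionSign A B = transpositionSign B A := by
  simp only [transpositionSign, mul_comm A.card, or_comm (a := A ⊆ B), min_comm A.card]

theorem transpositionSign_mul_swap (A B : Finset β) :
    transpositionSign A B * transpositionSign B A = 1 := by
  rw [transpositionSign_comm B A, Int.units_mul_self]

theorem transpositionSign_self (A : Finset β) : transpositionSign A A = 1 := by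
  simp only [transpositionSign, subset_refl, or_self, if_true, min_self, ← Nat.mul_succ]
  exact (Nat.even_mul_succ_self _).neg_one_pow

theorem transpositionSign_smul {G : Type*} [Group G] [MulAction G β] (g : G) (A B : Finset β) :
    transpositionSign (g • A) (g • B) = transpositionSign A B := by
  simp only [transpositionSign, Finset.card_smul_finset, Finset.smul_finset_subset_smul_finset_iff]

end TranspositionSign

theorem card_Icc_of_lt {i j : ℕ} (h : i < j) : (Finset.Icc i j).card = j - i - 1 + 2 := by
  rw [Nat.card_Icc]
  omega

theorem transpositionSign_Icc_of_disjoint {i j p q : ℕ} (hij : i < j) (hpq : p < q)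
    (h : j < p ∨ q < i) :
    transpositionSign (Finset.Icc i j) (Finset.Icc p q) = (-1) ^ ((j - i - 1) * (q - p - 1)) := by
  have hsub : ¬ (Finset.Icc i j ⊆ Finset.Icc p q ∨ Finset.Icc p q ⊆ Finset.Icc i j) := by
    rw [Finset.Icc_subset_Icc_iff hij.le, Finset.Icc_subset_Icc_iff hpq.le]
    omega
  rw [transpositionSign, if_neg hsub, card_Icc_of_lt hij, card_Icc_of_lt hpq]
  apply neg_one_pow_congr
  simp [parity_simps]

theorem transpositionSign_Icc_of_le {i j p q : ℕ} (hpq : p < q) (hip : i ≤ p) (hqj : q ≤ j) :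
    transpositionSign (Finset.Icc i j) (Finset.Icc p q) =
      (-1) ^ ((j - i - 1) * (q - p - 1)) * (-1) ^ (q - p - 1) := by
  have hsub := Finset.Icc_subset_Icc hip hqj
  rw [transpositionSign, if_pos (.inr hsub), min_eq_right (Finset.card_le_card hsub), ← pow_add,
    card_Icc_of_lt (hip.trans_lt (hpq.trans_le hqj)), card_Icc_of_lt hpq]
  apply neg_one_pow_congr
  simp [parity_simps]

namespace XIdx

variable {n : ℕ}

/-- The interval `[i, j]` of the generator `X_{i,j}`. -/
def interval (a : XIdx n) : Finset ℕ := Finset.Icc a.1.1 a.1.2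

/-- The reversal of the interval `[i, j]`, attached to the generator `X_{i,j}`. -/
def perm (a : XIdx n) : Equiv.Perm ℕ := reversal a.1.1 a.1.2

/-- The sign of a word in the generators. Multiplying each word by its sign turns the relations of
the signed nilcactus algebra into relations without signs. -/
noncomputable def wordSign (w : FreeMonoid (XIdx n)) : ℤˣ :=
  orderedSign transpositionSign (translates perm interval w.toList)

theorem isExchange_of_disjoint {a b : XIdx n} (h : a.1.2 < b.1.1 ∨ b.1.2 < a.1.1) :
    IsExchange perm interval a b b where
  mul_eq := reversal_mul_reversal_of_disjoint h
  smul_eq := reversal_smul_Icc_of_disjoint h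
  smul_fixed := reversal_smul_Icc_of_disjoint (by omega)

/-- The generator whose interval is the image of the interval of `b` under the reversal of `a`. -/
def reflect (a b : XIdx n) (hl : a.1.1 ≤ b.1.1) (hr : b.1.2 ≤ a.1.2) : XIdx n :=
  ⟨(a.1.1 + a.1.2 - b.1.2, a.1.1 + a.1.2 - b.1.1), by have := a.2; have := b.2; dsimp only; omega⟩

theorem isExchange_reflect {a b : XIdx n} (hl : a.1.1 ≤ b.1.1) (hr : b.1.2 ≤ a.1.2) :
    IsExchange perm interval a b (reflect a b hl hr) where
  mul_eq := reversal_mul_reversal_of_le hl hr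
  smul_eq := reversal_smul_Icc_of_le b.2.2.1.le hl hr
  smul_fixed := by
    have := b.2
    apply reversal_smul_Icc_of_ge <;> dsimp only [reflect] <;> omega

theorem wordSign_exchange {a b c : XIdx n} (h : IsExchange perm interval a b c)
    (p q : FreeMonoid (XIdx n)) :
    wordSign (p * (.of a * .of b) * q) =
      transpositionSign a.interval c.interval * wordSign (p * (.of c * .of a) * q) := by
  have htoList (a b : XIdx n) :
      (p * (.of a * .of b) * q).toList = p.toList ++ a :: b :: q.toList := by simp
  rw [wordSign, wordSign, htoList, htoList, h.orderedSign_translates transpositionSign_mul_swap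
    transpositionSign_self transpositionSign_smul]

end XIdx

section DefiningRelations

variable {n : ℕ}

theorem xf_of_lt (a : XIdx n) : xf n a.1.1 a.1.2 = FreeAlgebra.ι ℤ a :=
  dif_pos a.2

theorem xf_of_gt (a : XIdx n) :
    xf n a.1.2 a.1.1 = (-1 : ℤ) ^ (a.1.2 - a.1.1 - 1) • FreeAlgebra.ι ℤ a := by
  rw [xf, dif_neg fun h => h.2.1.not_gt a.2.2.1, dif_pos a.2]

theorem IsExchange.isTwistedMonomialRel {a b c : XIdx n}
    (h : IsExchange XIdx.perm XIdx.interval a b c) {k : ℤ}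
    (hk : k = transpositionSign a.interval c.interval) :
    IsTwistedMonomialRel (FreeMonoid.lift (FreeAlgebra.ι ℤ)) XIdx.wordSign
      (FreeAlgebra.ι ℤ a * FreeAlgebra.ι ℤ b) (k • (FreeAlgebra.ι ℤ c * FreeAlgebra.ι ℤ a)) := by
  have hι (d : XIdx n) : FreeAlgebra.ι ℤ d = FreeMonoid.lift (FreeAlgebra.ι ℤ) (.of d) :=
    (FreeMonoid.lift_eval_of _ d).symm
  rw [hk, hι a, hι b, hι c, ← map_mul, ← map_mul, ← Units.smul_def]
  exact .exchange _ _ _ (XIdx.wordSign_exchange h)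

theorem isTwistedMonomialRel_sq (a : XIdx n) :
    IsTwistedMonomialRel (FreeMonoid.lift (FreeAlgebra.ι ℤ)) XIdx.wordSign
      (xf n a.1.1 a.1.2 * xf n a.1.1 a.1.2) 0 := by
  simpa [xf_of_lt] using IsTwistedMonomialRel.vanish (ε := XIdx.wordSign)
    (m := FreeMonoid.lift (FreeAlgebra.ι ℤ)) (.of a * .of a)

theorem isTwistedMonomialRel_contain {a b : XIdx n} (hl : a.1.1 ≤ b.1.1) (hr : b.1.2 ≤ a.1.2) :
    IsTwistedMonomialRel (FreeMonoid.lift (FreeAlgebra.ι ℤ)) XIdx.wordSign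
      (xf n a.1.1 a.1.2 * xf n b.1.1 b.1.2)
      ((-1 : ℤ) ^ ((a.1.2 - a.1.1 - 1) * (b.1.2 - b.1.1 - 1)) •
        (xf n (a.1.1 + a.1.2 - b.1.1) (a.1.1 + a.1.2 - b.1.2) * xf n a.1.1 a.1.2)) := by
  let c := a.reflect b hl hr
  have := b.2
  have hlen : c.1.2 - c.1.1 - 1 = b.1.2 - b.1.1 - 1 := by
    dsimp only [c, XIdx.reflect]
    omega
  have hc : xf n (a.1.1 + a.1.2 - b.1.1) (a.1.1 + a.1.2 - b.1.2) =
      (-1 : ℤ) ^ (b.1.2 - b.1.1 - 1) • FreeAlgebra.ι ℤ c := hlen ▸ xf_of_gt c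
  rw [xf_of_lt, xf_of_lt, hc, smul_mul_assoc, smul_smul]
  refine (XIdx.isExchange_reflect hl hr).isTwistedMonomialRel ?_
  rw [XIdx.interval, XIdx.interval, transpositionSign_Icc_of_le c.2.2.1, hlen]
  · push_cast
    rfl
  all_goals
    dsimp only [c, XIdx.reflect]
    omega

theorem isTwistedMonomialRel_disj {a b : XIdx n} (h : a.1.2 < b.1.1 ∨ b.1.2 < a.1.1) :
    IsTwistedMonomialRel (FreeMonoid.lift (FreeAlgebra.ι ℤ)) XIdx.wordSign
      (xf n a.1.1 a.1.2 * xf n b.1.1 b.1.2)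
      ((-1 : ℤ) ^ ((a.1.2 - a.1.1 - 1) * (b.1.2 - b.1.1 - 1)) •
        (xf n b.1.1 b.1.2 * xf n a.1.1 a.1.2)) := by
  rw [xf_of_lt, xf_of_lt]
  refine (XIdx.isExchange_of_disjoint h).isTwistedMonomialRel ?_
  rw [XIdx.interval, XIdx.interval, transpositionSign_Icc_of_disjoint a.2.2.1 b.2.2.1 h]
  push_cast
  rfl

theorem XRel.isTwistedMonomialRel {x y : FreeAlgebra ℤ (XIdx n)} (h : XRel n x y) :
    IsTwistedMonomialRel (FreeMonoid.lift (FreeAlgebra.ι ℤ)) XIdx.wordSign x y := by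
  cases h with
  | sq i j h1 h2 h3 => exact isTwistedMonomialRel_sq ⟨(i, j), h1, h2, h3⟩
  | contain i j i' j' h1 h2 h3 h1' h2' h3' hsub =>
    obtain ⟨hl, hr⟩ := (Set.Icc_subset_Icc_iff h2'.le).1 hsub
    exact isTwistedMonomialRel_contain (a := ⟨(i, j), h1, h2, h3⟩) (b := ⟨(i', j'), h1', h2', h3'⟩)
      hl hr
  | disj i j i' j' h1 h2 h3 h1' h2' h3' hd =>
    have hsep : j < i' ∨ j' < i := by
      have := Set.eq_empty_iff_forall_notMem.1 hd (max i i')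
      simp only [Set.mem_inter_iff, Set.mem_Icc] at this
      omega
    exact isTwistedMonomialRel_disj (a := ⟨(i, j), h1, h2, h3⟩) (b := ⟨(i', j'), h1', h2', h3'⟩)
      hsep

end DefiningRelations

/-- The ring `X(n)` is free as a ℤ-module. -/
theorem Xring_free (n : ℕ) (hn : 2 ≤ n) : Module.Free ℤ (Xring n) :=
  free_ringQuot_of_isTwistedMonomialRel _ (basisFreeMonoid_eq_lift ℤ (XIdx n)) fun _ _ h =>
    h.isTwistedMonomialRel
end
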